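/- Let n ≥ 1, δ ∈ (0, n], and let f : ℝⁿ → [0, ∞] satisfy ∫_K f dH̃^δ_∞ < ∞ for every bounded set K ⊆ ℝⁿ. Then: (1) for every fixed r > 0, the map x ↦ f^δ_{B(x,r)} is lower semicontinuous on ℝⁿ (equivalently, {x ∈ ℝⁿ : f^δ_{B(x,r)} > t} is open for every t ∈ ℝ); and (2) the function x ↦ limsup_{r→0⁺} f^δ_{B(x,r)} is Lebesgue measurable. -/

import Mathlib

open MeasureTheory Set Metric Filter Topology
open scoped ENNReal

noncomputable section

/-- Euclidean space `ℝⁿ`. -/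
abbrev En (n : ℕ) : Type := EuclideanSpace ℝ (Fin n)

/-- The half-open dyadic cube `2^k (m + [0,1)ⁿ)`, `k : ℤ`, `m : ℤⁿ`. -/
def dyadicCube (n : ℕ) (k : ℤ) (m : Fin n → ℤ) : Set (En n) :=
  {x | ∀ i, (m i : ℝ) * 2 ^ k ≤ x i ∧ x i < ((m i : ℝ) + 1) * 2 ^ k}

/-- The `δ`-dimensional dyadic Hausdorff content `H̃^δ_∞`: the infimum of `Σ ℓ(Q_i)^δ`
over all countable collections of dyadic cubes whose union's interior covers `E`. -/
def dyadicContent (n : ℕ) (δ : ℝ) (E : Set (En n)) : ℝ≥0∞ :=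
  ⨅ (c : ℕ → ℤ × (Fin n → ℤ))
    (_ : E ⊆ interior (⋃ i, dyadicCube n (c i).1 (c i).2)),
    ∑' i, ENNReal.ofReal (((2 : ℝ) ^ (c i).1) ^ δ)

/-- The Choquet integral `∫_Ω f dH̃^δ_∞ := ∫_0^∞ H̃^δ_∞({x ∈ Ω : f x > t}) dt`
of a `[0,∞]`-valued function over `Ω ⊆ ℝⁿ`. -/
def choquetIntegral (n : ℕ) (δ : ℝ) (Ω : Set (En n)) (f : En n → ℝ≥0∞) : ℝ≥0∞ :=
  ∫⁻ t in Ioi (0 : ℝ), dyadicContent n δ {x | x ∈ Ω ∧ ENNReal.ofReal t < f x}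

/-- The Choquet integral `∫_Ω |f| dH̃^δ_∞` of a real-valued function. -/
def choquetIntegralAbs (n : ℕ) (δ : ℝ) (Ω : Set (En n)) (f : En n → ℝ) : ℝ≥0∞ :=
  choquetIntegral n δ Ω (fun x => ENNReal.ofReal |f x|)

/-- The Choquet integral `∫_Ω |f| dH̃^δ_∞` of an extended-real-valued function. -/
def choquetIntegralEAbs (n : ℕ) (δ : ℝ) (Ω : Set (En n)) (f : En n → EReal) : ℝ≥0∞ :=
  choquetIntegral n δ Ω (fun x => (f x).abs)

/-- The ball average `f^δ_{B(x,r)} := (1/H̃^δ_∞(B(x,r))) ∫_{B(x,r)} f dH̃^δ_∞`. -/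
def ballAvg (n : ℕ) (δ : ℝ) (f : En n → ℝ≥0∞) (x : En n) (r : ℝ) : ℝ≥0∞ :=
  choquetIntegral n δ (ball x r) f / dyadicContent n δ (ball x r)

/-- The Hausdorff-content centred maximal function `M^δ f(x)`. -/
def maximal (n : ℕ) (δ : ℝ) (f : En n → ℝ≥0∞) (x : En n) : ℝ≥0∞ :=
  ⨆ (r : ℝ) (_ : 0 < r), ballAvg n δ f x r

/-- `f^δ_*(x) := limsup_{r→0⁺} (1/H̃^δ_∞(B(x,r))) ∫_{B(x,r)} |f(y) − f(x)| dH̃^δ_∞(y)`. -/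
def lebDev (n : ℕ) (δ : ℝ) (f : En n → ℝ) (x : En n) : ℝ≥0∞ :=
  limsup (fun r : ℝ => choquetIntegralAbs n δ (ball x r) (fun y => f y - f x) /
    dyadicContent n δ (ball x r)) (𝓝[>] (0 : ℝ))

/-- `limsup_{r→0⁺} f^δ_{B(x,r)}` of the ball averages. -/
def limsupAvg (n : ℕ) (δ : ℝ) (f : En n → ℝ≥0∞) (x : En n) : ℝ≥0∞ :=
  limsup (fun r : ℝ => ballAvg n δ f x r) (𝓝[>] (0 : ℝ))

/-- Indices of dyadic cubes. -/
abbrev Idx (n : ℕ) : Type := ℤ × (Fin n → ℤ)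

/-- The cube of an index. -/
def cub {n : ℕ} (q : Idx n) : Set (En n) := dyadicCube n q.1 q.2

/-- Union of a family of cubes. -/
def fam {n : ℕ} (C : Set (Idx n)) : Set (En n) := ⋃ q ∈ C, cub q

def wt {n : ℕ} (δ : ℝ) (q : Idx n) : ℝ≥0∞ := ENNReal.ofReal (((2 : ℝ) ^ q.1) ^ δ)

def cost {n : ℕ} (δ : ℝ) (C : Set (Idx n)) : ℝ≥0∞ := ∑' q, C.indicator (wt δ) q

lemma mem_fam {n : ℕ} {C : Set (Idx n)} {x : En n} : x ∈ fam C ↔ ∃ q ∈ C, x ∈ cub q := by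
  simp [fam]

lemma mem_cub {n : ℕ} (q : Idx n) (x : En n) :
    x ∈ cub q ↔ ∀ i, ⌊x i / (2 : ℝ) ^ q.1⌋ = q.2 i := by
  unfold cub dyadicCube
  simp only [mem_ofPred_eq]
  refine forall_congr' fun i => ?_
  have h : (0 : ℝ) < 2 ^ q.1 := by positivity
  rw [Int.floor_eq_iff, le_div_iff₀ h, div_lt_iff₀ h]

/-- The level `k` cube containing `x`. -/
def at_ {n : ℕ} (k : ℤ) (x : En n) : Idx n := (k, fun i => ⌊x i / (2 : ℝ) ^ k⌋)

lemma mem_at {n : ℕ} (k : ℤ) (x : En n) : x ∈ cub (at_ k x) := by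
  rw [mem_cub]; intro i; rfl

lemma floor_nest (k k' : ℤ) (h : k ≤ k') (x : ℝ) :
    ⌊x / (2 : ℝ) ^ k'⌋ = ⌊x / (2 : ℝ) ^ k⌋ / ((2 ^ (k' - k).toNat : ℕ) : ℤ) := by
  rw [← Int.floor_div_natCast]
  congr 1
  have : k' = k + ((k' - k).toNat : ℤ) := by omega
  conv_lhs => rw [this, zpow_add₀ (by norm_num), zpow_natCast]
  push_cast
  rw [div_div]

lemma nest {n : ℕ} {q q' : Idx n} (h : q.1 ≤ q'.1) {y : En n} (hy : y ∈ cub q)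
    (hy' : y ∈ cub q') : cub q ⊆ cub q' := by
  intro x hx
  rw [mem_cub] at *
  intro i
  rw [floor_nest _ _ h, hx i, ← hy i, ← floor_nest _ _ h, hy' i]

lemma same {n : ℕ} {q q' : Idx n} (h : q.1 = q'.1) {y : En n} (hy : y ∈ cub q)
    (hy' : y ∈ cub q') : q = q' := by
  rw [mem_cub] at *
  refine Prod.ext h (funext fun i => ?_)
  rw [← hy i, ← hy' i, h]

lemma wt_eq {n : ℕ} (δ : ℝ) (q : Idx n) :
    wt δ q = ENNReal.ofReal (((2 : ℝ) ^ δ) ^ q.1) := by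
  unfold wt
  congr 1
  rw [← Real.rpow_intCast, ← Real.rpow_intCast, ← Real.rpow_mul (by norm_num),
    ← Real.rpow_mul (by norm_num), mul_comm]

lemma one_lt_two_rpow {δ : ℝ} (h : 0 < δ) : (1 : ℝ) < 2 ^ δ :=
  Real.one_lt_rpow (by norm_num) h

lemma wt_mono {n : ℕ} {δ : ℝ} (h : 0 < δ) {q q' : Idx n} (hq : q.1 ≤ q'.1) :
    wt δ q ≤ wt δ q' := by
  rw [wt_eq, wt_eq]
  exact ENNReal.ofReal_le_ofReal (zpow_le_zpow_right₀ (one_lt_two_rpow h).le hq)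

lemma bdd_of_wt {n : ℕ} {δ : ℝ} (h : 0 < δ) {B : ℝ≥0∞} (hB : B ≠ ⊤) :
    ∃ K : ℤ, ∀ q : Idx n, wt δ q ≤ B → q.1 ≤ K := by
  obtain ⟨K, hK⟩ := pow_unbounded_of_one_lt B.toReal (one_lt_two_rpow h)
  refine ⟨K, fun q hq => ?_⟩
  by_contra! hc
  rw [wt_eq, ← ENNReal.ofReal_toReal hB,
    ENNReal.ofReal_le_ofReal_iff ENNReal.toReal_nonneg] at hq
  have := zpow_le_zpow_right₀ (one_lt_two_rpow h).le hc.le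
  rw [zpow_natCast] at this
  linarith

lemma exists_small {δ : ℝ} (n : ℕ) (h : 0 < δ) {ε : ℝ≥0∞} (hε : ε ≠ 0) :
    ∃ k : ℤ, ∀ q : Idx n, q.1 = k → wt δ q ≤ ε := by
  obtain ⟨e, he0, he⟩ : ∃ e : ℝ, 0 < e ∧ ENNReal.ofReal e ≤ ε := by
    rcases eq_or_ne ε ⊤ with rfl | ht
    · exact ⟨1, one_pos, le_top⟩
    · exact ⟨ε.toReal, ENNReal.toReal_pos hε ht, (ENNReal.ofReal_toReal ht).le⟩
  obtain ⟨m, hm⟩ := exists_pow_lt_of_lt_one he0 (inv_lt_one_of_one_lt₀ (one_lt_two_rpow h))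
  refine ⟨-m, fun q hq => le_trans ?_ he⟩
  rw [wt_eq, hq]
  apply ENNReal.ofReal_le_ofReal
  rw [zpow_neg, zpow_natCast, ← inv_pow]
  exact hm.le

lemma wt_le_cost {n : ℕ} {δ : ℝ} {C : Set (Idx n)} {q : Idx n} (hq : q ∈ C) :
    wt δ q ≤ cost δ C := by
  have := ENNReal.le_tsum (f := C.indicator (wt δ)) q
  rwa [indicator_of_mem hq] at this

lemma cost_iUnion_le {n : ℕ} (δ : ℝ) {ι : Type*} (C : ι → Set (Idx n)) :
    cost δ (⋃ i, C i) ≤ ∑' i, cost δ (C i) := by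
  unfold cost
  rw [ENNReal.tsum_comm]
  refine ENNReal.tsum_le_tsum fun q => ?_
  by_cases h : q ∈ ⋃ i, C i
  · rw [indicator_of_mem h]
    obtain ⟨i, hi⟩ := mem_iUnion.1 h
    refine le_trans ?_ (ENNReal.le_tsum i)
    rw [indicator_of_mem hi]
  · simp [h]

lemma cost_singleton {n : ℕ} (δ : ℝ) (q : Idx n) : cost δ {q} = wt δ q := by
  unfold cost
  rw [tsum_eq_single q]
  · simp
  · intro b hb; simp [hb]

lemma content_mono {n : ℕ} {δ : ℝ} {E F : Set (En n)} (h : E ⊆ F) :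
    dyadicContent n δ E ≤ dyadicContent n δ F := by
  unfold dyadicContent
  refine le_iInf fun c => le_iInf fun hc => ?_
  exact iInf₂_le_of_le c (h.trans hc) le_rfl

lemma content_le_cost {n : ℕ} {δ : ℝ} (hδ : 0 < δ) {E : Set (En n)} {C : Set (Idx n)}
    (h : E ⊆ interior (fam C)) : dyadicContent n δ E ≤ cost δ C := by
  refine ENNReal.le_of_forall_pos_le_add fun ε hε _ => ?_
  obtain ⟨e, he0, he⟩ := ENNReal.exists_pos_sum_of_countable (ε := (ε : ℝ≥0∞))
    (by exact_mod_cast hε.ne') ℕ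
  choose k hk using fun i : ℕ => exists_small (δ := δ) n hδ (ε := (e i : ℝ≥0∞))
    (by exact_mod_cast (he0 i).ne')
  obtain ⟨eq⟩ : Nonempty (ℕ ≃ C ⊕ ℕ) := nonempty_equiv_of_countable
  let g : C ⊕ ℕ → Idx n := Sum.elim (fun q => q.1) (fun i => (k i, 0))
  have hsub : fam C ⊆ ⋃ i, dyadicCube n (g (eq i)).1 (g (eq i)).2 := by
    intro x hx
    obtain ⟨q, hq, hxq⟩ := mem_fam.1 hx
    refine mem_iUnion.2 ⟨eq.symm (Sum.inl ⟨q, hq⟩), ?_⟩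
    simpa [g, cub] using hxq
  refine (iInf₂_le (fun i => g (eq i)) (h.trans (interior_mono hsub))).trans ?_
  have h1 : ∑' i, ENNReal.ofReal (((2 : ℝ) ^ (g (eq i)).1) ^ δ) = ∑' s, wt δ (g s) :=
    eq.tsum_eq (fun s => wt δ (g s))
  rw [h1, ENNReal.summable.tsum_sum ENNReal.summable]
  gcongr
  · unfold cost
    rw [← tsum_subtype]
    rfl
  · refine le_trans (ENNReal.tsum_le_tsum fun i => ?_) he.le
    exact hk i _ rfl

lemma exists_cover {n : ℕ} {δ : ℝ} {E : Set (En n)} {a : ℝ≥0∞}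
    (h : dyadicContent n δ E < a) : ∃ C : Set (Idx n), E ⊆ interior (fam C) ∧ cost δ C < a := by
  unfold dyadicContent at h
  simp only [iInf_lt_iff] at h
  obtain ⟨c, hc, hlt⟩ := h
  refine ⟨⋃ i, {c i}, ?_, lt_of_le_of_lt ((cost_iUnion_le δ _).trans ?_) hlt⟩
  · refine hc.trans (interior_mono ?_)
    intro x hx
    obtain ⟨i, hi⟩ := mem_iUnion.1 hx
    exact mem_fam.2 ⟨c i, by simp, hi⟩
  · refine ENNReal.tsum_le_tsum fun i => ?_
    rw [cost_singleton]; rfl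

lemma fam_mono {n : ℕ} {C D : Set (Idx n)} (h : C ⊆ D) : fam C ⊆ fam D :=
  biUnion_subset_biUnion_left h

lemma content_iUnion_le {n : ℕ} {δ : ℝ} (hδ : 0 < δ) {ι : Type*} [Countable ι]
    (E : ι → Set (En n)) :
    dyadicContent n δ (⋃ i, E i) ≤ ∑' i, dyadicContent n δ (E i) := by
  refine ENNReal.le_of_forall_pos_le_add fun ε hε hfin => ?_
  obtain ⟨e, he0, he⟩ := ENNReal.exists_pos_sum_of_countable (ε := (ε : ℝ≥0∞))
    (by exact_mod_cast hε.ne') ι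
  have hlt : ∀ i, dyadicContent n δ (E i) < dyadicContent n δ (E i) + e i := fun i =>
    ENNReal.lt_add_right (ne_top_of_le_ne_top hfin.ne (ENNReal.le_tsum i))
      (by exact_mod_cast (he0 i).ne')
  choose C hC hcost using fun i => exists_cover (hlt i)
  refine (content_le_cost hδ (C := ⋃ i, C i) ?_).trans ((cost_iUnion_le δ C).trans ?_)
  · exact iUnion_subset fun i => (hC i).trans (interior_mono (fam_mono (subset_iUnion C i)))
  · refine (ENNReal.tsum_le_tsum fun i => (hcost i).le).trans ?_
    rw [ENNReal.tsum_add]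
    gcongr

/-- Maximal cubes of a family. -/
def mx {n : ℕ} (S : Set (Idx n)) : Set (Idx n) :=
  {q | q ∈ S ∧ ∀ q' ∈ S, q.1 < q'.1 → ∀ y, y ∈ cub q → y ∉ cub q'}

/-- Common refinement of two families. -/
def meetF {n : ℕ} (A C : Set (Idx n)) : Set (Idx n) :=
  {q | (q ∈ A ∧ ∃ q' ∈ C, q.1 ≤ q'.1 ∧ ∃ y, y ∈ cub q ∧ y ∈ cub q') ∨
    (q ∈ C ∧ ∃ q' ∈ A, q.1 ≤ q'.1 ∧ ∃ y, y ∈ cub q ∧ y ∈ cub q')}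

lemma fam_mx {n : ℕ} {S : Set (Idx n)} {K : ℤ} (hK : ∀ q ∈ S, q.1 ≤ K) :
    fam S ⊆ fam (mx S) := by
  intro x hx
  obtain ⟨q, hq, hxq⟩ := mem_fam.1 hx
  obtain ⟨k, ⟨q', hq', hxq', rfl⟩, hmax⟩ := Int.exists_greatest_of_bdd
    (P := fun k => ∃ q ∈ S, x ∈ cub q ∧ q.1 = k)
    ⟨K, by rintro z ⟨q, hq, -, rfl⟩; exact hK q hq⟩ ⟨q.1, q, hq, hxq, rfl⟩
  refine mem_fam.2 ⟨q', ⟨hq', fun q'' hq'' hlt y hy hy' => ?_⟩, hxq'⟩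
  have := hmax q''.1 ⟨q'', hq'', nest hlt.le hy hy' hxq', rfl⟩
  omega

lemma fam_meet {n : ℕ} (A C : Set (Idx n)) : fam A ∩ fam C ⊆ fam (meetF A C) := by
  rintro x ⟨ha, hc⟩
  obtain ⟨a, ha, hxa⟩ := mem_fam.1 ha
  obtain ⟨c, hc, hxc⟩ := mem_fam.1 hc
  rcases le_total a.1 c.1 with h | h
  · exact mem_fam.2 ⟨a, Or.inl ⟨ha, c, hc, h, x, hxa, hxc⟩, hxa⟩
  · exact mem_fam.2 ⟨c, Or.inr ⟨hc, a, ha, h, x, hxc, hxa⟩, hxc⟩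

lemma cost_strong {n : ℕ} (δ : ℝ) (S C : Set (Idx n)) :
    cost δ (mx (S ∪ C)) + cost δ (meetF (mx S) C) ≤ cost δ (mx S) + cost δ C := by
  unfold cost
  rw [← ENNReal.tsum_add, ← ENNReal.tsum_add]
  refine ENNReal.tsum_le_tsum fun q => ?_
  have h1 : q ∈ mx (S ∪ C) → q ∈ mx S ∨ q ∈ C := by
    rintro ⟨h | h, hm⟩
    · exact Or.inl ⟨h, fun q' hq' => hm q' (Or.inl hq')⟩
    · exact Or.inr h
  have h2 : q ∈ meetF (mx S) C → q ∈ mx S ∨ q ∈ C := by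
    rintro (h | h)
    · exact Or.inl h.1
    · exact Or.inr h.1
  have h3 : q ∈ mx (S ∪ C) → q ∈ meetF (mx S) C → q ∈ mx S ∧ q ∈ C := by
    rintro ⟨_, hm⟩ (⟨h, q', hq', hle, y, hy, hy'⟩ | ⟨h, q', hq', hle, y, hy, hy'⟩)
    · have : ¬ q.1 < q'.1 := fun hlt => hm q' (Or.inr hq') hlt y hy hy'
      have := same (by omega) hy hy'
      subst this
      exact ⟨h, hq'⟩
    · have : ¬ q.1 < q'.1 := fun hlt => hm q' (Or.inl hq'.1) hlt y hy hy'
      have := same (by omega) hy hy'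
      subst this
      exact ⟨hq', h⟩
  by_cases a : q ∈ mx (S ∪ C) <;> by_cases b : q ∈ meetF (mx S) C <;>
    by_cases c : q ∈ mx S <;> by_cases d : q ∈ C <;> simp_all

lemma cost_mono {n : ℕ} (δ : ℝ) {C D : Set (Idx n)} (h : C ⊆ D) : cost δ C ≤ cost δ D :=
  ENNReal.tsum_le_tsum fun q => indicator_le_indicator_of_subset h (fun _ => zero_le) q

lemma content_iUnion_mono {n : ℕ} {δ : ℝ} (hδ : 0 < δ) (E : ℕ → Set (En n)) (hE : Monotone E) :
    dyadicContent n δ (⋃ i, E i) ≤ ⨆ i, dyadicContent n δ (E i) := by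
  refine ENNReal.le_of_forall_pos_le_add fun ε hε hfin => ?_
  set s := ⨆ i, dyadicContent n δ (E i) with hs
  have hle : ∀ i, dyadicContent n δ (E i) ≤ s := fun i => le_iSup (fun i => dyadicContent n δ (E i)) i
  have hft : ∀ i, dyadicContent n δ (E i) ≠ ⊤ := fun i => ne_top_of_le_ne_top hfin.ne (hle i)
  obtain ⟨e, he0, he⟩ := ENNReal.exists_pos_sum_of_countable (ε := (ε : ℝ≥0∞))
    (by exact_mod_cast hε.ne') ℕ
  have hlt : ∀ i, dyadicContent n δ (E i) < dyadicContent n δ (E i) + e i := fun i =>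
    ENNReal.lt_add_right (hft i) (by exact_mod_cast (he0 i).ne')
  choose C hC hcost using fun i => exists_cover (hlt i)
  obtain ⟨K, hK⟩ := bdd_of_wt (n := n) hδ (B := s + ε) (by finiteness)
  have hK' : ∀ j, ∀ q ∈ C j, q.1 ≤ K := fun j q hq => hK q <| (wt_le_cost hq).trans <|
    (hcost j).le.trans <| add_le_add (hle j) ((ENNReal.le_tsum j).trans he.le)
  let S : ℕ → Set (Idx n) := fun k => ⋃ j ≤ k, C j
  have hSK : ∀ k, ∀ q ∈ S k, q.1 ≤ K := by
    intro k q hq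
    simp only [S, mem_iUnion] at hq
    obtain ⟨j, _, hj⟩ := hq
    exact hK' j q hj
  have hCS : ∀ k, C k ⊆ S k := fun k q hq => by
    simp only [S, mem_iUnion]; exact ⟨k, le_rfl, hq⟩
  have hmain : ∀ k, cost δ (mx (S k)) ≤
      dyadicContent n δ (E k) + ∑ i ∈ Finset.range (k + 1), (e i : ℝ≥0∞) := by
    intro k
    induction k with
    | zero =>
      have : mx (S 0) ⊆ C 0 := by
        intro q hq
        have := hq.1
        simpa [S] using this
      simpa using (cost_mono δ this).trans (hcost 0).le
    | succ k ih =>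
      have hS : S (k + 1) = S k ∪ C (k + 1) := biUnion_le_succ C k
      have h1 := cost_strong δ (S k) (C (k + 1))
      rw [← hS] at h1
      have h2 : dyadicContent n δ (E k) ≤ cost δ (meetF (mx (S k)) (C (k + 1))) := by
        refine content_le_cost hδ ?_
        refine Subset.trans ?_ (interior_mono (fam_meet _ _))
        rw [interior_inter]
        refine subset_inter ?_ ((hE (Nat.le_succ k)).trans (hC (k + 1)))
        exact (hC k).trans (interior_mono ((fam_mono (hCS k)).trans (fam_mx (hSK k))))
      rw [Finset.sum_range_succ]
      refine (ENNReal.add_le_add_iff_right (hft k)).1 ?_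
      calc cost δ (mx (S (k + 1))) + dyadicContent n δ (E k) ≤ _ := by gcongr
        _ ≤ _ := h1
        _ ≤ _ := add_le_add ih (hcost (k + 1)).le
        _ = _ := by ring
  have hB : ∀ k, cost δ (mx (S k)) ≤ s + ε := fun k => (hmain k).trans
    (add_le_add (hle k) ((ENNReal.sum_le_tsum _).trans he.le))
  have hmxs : ∀ q ∈ mx (⋃ k, C k), ∀ᶠ k in atTop, q ∈ mx (S k) := by
    rintro q ⟨hq, hm⟩
    obtain ⟨j, hj⟩ := mem_iUnion.1 hq
    filter_upwards [eventually_ge_atTop j] with k hk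
    refine ⟨by simp only [S, mem_iUnion]; exact ⟨j, hk, hj⟩, fun q' hq' => hm q' ?_⟩
    simp only [S, mem_iUnion] at hq'
    obtain ⟨i, _, hi⟩ := hq'
    exact mem_iUnion.2 ⟨i, hi⟩
  have hfinal : cost δ (mx (⋃ k, C k)) ≤ s + ε := by
    unfold cost
    rw [ENNReal.tsum_eq_iSup_sum]
    refine iSup_le fun F => ?_
    have : ∀ᶠ k in atTop, ∀ q ∈ F, q ∈ mx (⋃ k, C k) → q ∈ mx (S k) := by
      rw [Finset.eventually_all]
      intro q _
      by_cases h : q ∈ mx (⋃ k, C k)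
      · filter_upwards [hmxs q h] with k hk _ using hk
      · exact Eventually.of_forall fun k h' => absurd h' h
    obtain ⟨k, hk⟩ := this.exists
    refine le_trans ?_ (hB k)
    refine le_trans (Finset.sum_le_sum fun q hq => ?_) (ENNReal.sum_le_tsum F)
    by_cases h : q ∈ mx (⋃ k, C k)
    · rw [indicator_of_mem h, indicator_of_mem (hk q hq h)]
    · simp [h]
  refine (content_le_cost hδ ?_).trans hfinal
  refine iUnion_subset fun i => (hC i).trans (interior_mono ?_)
  refine (fam_mono (subset_iUnion C i)).trans (fam_mx (K := K) ?_)
  intro q hq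
  obtain ⟨j, hj⟩ := mem_iUnion.1 hq
  exact hK' j q hj

lemma content_translate_cub {n : ℕ} {δ : ℝ} (hδ : 0 < δ) (v : En n) (q : Idx n) :
    dyadicContent n δ {x | x - v ∈ cub q} ≤ (Fintype.card (Fin n → Fin 4) : ℝ≥0∞) * wt δ q := by
  let M : Fin n → ℤ := fun i => ⌊v i / (2 : ℝ) ^ q.1⌋ + q.2 i
  let g : (Fin n → Fin 4) → Idx n := fun j => (q.1, fun i => M i - 1 + ((j i : ℕ) : ℤ))
  have hp : (0 : ℝ) < 2 ^ q.1 := by positivity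
  let G : Set (En n) := ⋂ i, {y : En n | (M i : ℝ) - 1 < y i / (2 : ℝ) ^ q.1 ∧
    y i / (2 : ℝ) ^ q.1 < M i + 3}
  have hG : IsOpen G := by
    refine isOpen_iInter_of_finite fun i => ?_
    refine IsOpen.and (isOpen_lt ?_ ?_) (isOpen_lt ?_ ?_) <;> fun_prop
  have hGs : G ⊆ fam (⋃ j, {g j}) := by
    intro y hy
    have hy : ∀ i, (M i : ℝ) - 1 < y i / (2 : ℝ) ^ q.1 ∧ y i / (2 : ℝ) ^ q.1 < M i + 3 := by
      simpa [G] using hy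
    have h1 : ∀ i, M i - 1 ≤ ⌊y i / (2 : ℝ) ^ q.1⌋ := fun i => by
      rw [Int.le_floor]; push_cast; exact (hy i).1.le
    have h2 : ∀ i, ⌊y i / (2 : ℝ) ^ q.1⌋ < M i + 3 := fun i => by
      rw [Int.floor_lt]; push_cast; exact (hy i).2
    refine mem_fam.2 ⟨g (fun i => ⟨(⌊y i / (2 : ℝ) ^ q.1⌋ - (M i - 1)).toNat, ?_⟩), ?_, ?_⟩
    · have := h1 i; have := h2 i; omega
    · exact mem_iUnion.2 ⟨_, rfl⟩
    · rw [mem_cub]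
      intro i
      simp only [g]
      have := h1 i
      omega
  have hsub : {x | x - v ∈ cub q} ⊆ G := by
    intro x hx
    have hx : x - v ∈ cub q := hx
    rw [mem_cub] at hx
    simp only [G, mem_iInter]
    intro i
    have h := hx i
    rw [Int.floor_eq_iff] at h
    have e : (x - v) i = x i - v i := rfl
    rw [e, sub_div] at h
    have h1 := Int.floor_le (v i / (2 : ℝ) ^ q.1)
    have h2 := Int.lt_floor_add_one (v i / (2 : ℝ) ^ q.1)
    constructor <;> simp only [M] <;> push_cast <;> linarith [h.1, h.2]
  refine (content_le_cost hδ (C := ⋃ j, {g j}) ?_).trans ((cost_iUnion_le δ _).trans ?_)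
  · exact hsub.trans (interior_maximal hGs hG)
  · simp only [cost_singleton]
    rw [tsum_fintype]
    have : ∀ j, wt δ (g j) = wt δ q := fun j => rfl
    simp [this]

lemma content_translate {n : ℕ} {δ : ℝ} (hδ : 0 < δ) (v : En n) (C : Set (Idx n)) :
    dyadicContent n δ {x | x - v ∈ fam C} ≤ (Fintype.card (Fin n → Fin 4) : ℝ≥0∞) * cost δ C := by
  have : {x | x - v ∈ fam C} = ⋃ q : C, {x | x - v ∈ cub q.1} := by
    ext x; simp [fam]
  rw [this]
  refine (content_iUnion_le hδ _).trans ?_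
  unfold cost
  rw [← tsum_subtype, ← ENNReal.tsum_mul_left]
  exact ENNReal.tsum_le_tsum fun q => content_translate_cub hδ v q.1

lemma content_singleton {n : ℕ} {δ : ℝ} (hδ : 0 < δ) (p : En n) : dyadicContent n δ {p} = 0 := by
  by_contra h
  have hK : (Fintype.card (Fin n → Fin 4) : ℝ≥0∞) ≠ 0 := by
    exact_mod_cast Fintype.card_ne_zero
  obtain ⟨ε, hε0, hε⟩ : ∃ ε : ℝ≥0∞, ε ≠ 0 ∧ (Fintype.card (Fin n → Fin 4) : ℝ≥0∞) * ε <
      dyadicContent n δ {p} := by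
    obtain ⟨a, ha0, ha⟩ := exists_between (pos_iff_ne_zero.2 h)
    refine ⟨a / (Fintype.card (Fin n → Fin 4) : ℝ≥0∞), ?_, ?_⟩
    · exact (ENNReal.div_pos ha0.ne' (ENNReal.natCast_ne_top _)).ne'
    · rwa [ENNReal.mul_div_cancel hK (ENNReal.natCast_ne_top _)]
  obtain ⟨k, hk⟩ := exists_small (δ := δ) n hδ hε0
  have h1 := content_translate_cub hδ (0 : En n) (at_ k p)
  have h2 : dyadicContent n δ {p} ≤ dyadicContent n δ {x | x - 0 ∈ cub (at_ k p)} := by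
    refine content_mono ?_
    rintro x rfl
    simpa using mem_at k x
  have h3 := hk (at_ k p) rfl
  exact absurd hε (not_lt.2 (h2.trans (h1.trans (by gcongr))))

lemma content_null_iUnion {n : ℕ} {δ : ℝ} (hδ : 0 < δ) {ι : Type*} [Countable ι]
    (E : ι → Set (En n)) (h : ∀ i, dyadicContent n δ (E i) = 0) :
    dyadicContent n δ (⋃ i, E i) = 0 := by
  have := content_iUnion_le hδ E
  simpa [h] using this

lemma content_countable {n : ℕ} {δ : ℝ} (hδ : 0 < δ) {P : Set (En n)} (hP : P.Countable) :
    dyadicContent n δ P = 0 := by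
  have : Countable P := hP
  rw [← iUnion_of_singleton_coe P]
  exact content_null_iUnion hδ _ fun i => content_singleton hδ _

/-- Points approached in direction `w` only through tails of the family. -/
def badS {n : ℕ} (C : Set (Idx n)) (w : En n) : Set (En n) :=
  {p | ∀ F : Finset (Idx n), ∀ᶠ t : ℝ in 𝓝[>] 0, p - t • w ∈ fam (C \ F)}

lemma content_bad {n : ℕ} {δ : ℝ} (hδ : 0 < δ) {C : Set (Idx n)} (hC : cost δ C ≠ ⊤) (w : En n) :
    dyadicContent n δ (badS C w) = 0 := by
  set K : ℝ≥0∞ := (Fintype.card (Fin n → Fin 4) : ℝ≥0∞) with hKdef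
  have key : ∀ F : Finset (Idx n), dyadicContent n δ (badS C w) ≤ K * cost δ (C \ F) := by
    intro F
    let E : ℕ → Set (En n) := fun J =>
      {p | ∀ t : ℝ, 0 < t → t ≤ 1 / ((J : ℝ) + 1) → p - t • w ∈ fam (C \ F)}
    have hE : Monotone E := by
      intro i j hij p hp t ht htj
      exact hp t ht (htj.trans (one_div_le_one_div_of_le (by positivity) (by gcongr)))
    have hsub : badS C w ⊆ ⋃ J, E J := by
      intro p hp
      have := hp F
      rw [(nhdsGT_basis (0 : ℝ)).eventually_iff] at this
      obtain ⟨ε, hε, h⟩ := this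
      obtain ⟨J, hJ⟩ := exists_nat_one_div_lt hε
      exact mem_iUnion.2 ⟨J, fun t ht htJ => h ⟨ht, htJ.trans_lt hJ⟩⟩
    refine (content_mono hsub).trans ((content_iUnion_mono hδ E hE).trans (iSup_le fun J => ?_))
    refine le_trans (content_mono ?_) (content_translate hδ ((1 / ((J : ℝ) + 1)) • w) (C \ F))
    intro p hp
    exact hp _ (by positivity) le_rfl
  have ht := ENNReal.tendsto_tsum_compl_atTop_zero hC
  have ht2 : Tendsto (fun F : Finset (Idx n) => K * cost δ (C \ F)) atTop (𝓝 (K * 0)) := by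
    refine ENNReal.Tendsto.const_mul ?_ (Or.inr (ENNReal.natCast_ne_top _))
    refine ht.congr fun F => ?_
    unfold cost
    refine (tsum_subtype {q | q ∉ F} (C.indicator (wt δ))).trans ?_
    refine tsum_congr fun q => ?_
    by_cases h1 : q ∈ C <;> by_cases h2 : q ∈ F <;> simp [indicator, h1, h2]
  rw [mul_zero] at ht2
  exact le_antisymm (ge_of_tendsto' ht2 key) zero_le

lemma good_cube {n : ℕ} {C : Set (Idx n)} {w p : En n} (hp : p ∉ badS C w)
    (hc : ∀ᶠ t : ℝ in 𝓝[>] 0, p - t • w ∈ fam C) :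
    ∃ q ∈ C, ∃ᶠ t : ℝ in 𝓝[>] 0, p - t • w ∈ cub q := by
  by_contra! hcon
  apply hp
  intro F
  have : ∀ᶠ t : ℝ in 𝓝[>] 0, ∀ q ∈ F, q ∈ C → p - t • w ∉ cub q := by
    rw [Finset.eventually_all]
    intro q _
    by_cases h : q ∈ C
    · have := hcon q h
      filter_upwards [this] with t ht _ using ht
    · exact Eventually.of_forall fun t h' => absurd h' h
  filter_upwards [this, hc] with t ht hct
  obtain ⟨q, hq, hx⟩ := mem_fam.1 hct
  exact mem_fam.2 ⟨q, ⟨hq, fun hF => ht q hF hq hx⟩, hx⟩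

lemma good_cube_coord {n : ℕ} {q : Idx n} {w p : En n}
    (h : ∃ᶠ t : ℝ in 𝓝[>] 0, p - t • w ∈ cub q) (i : Fin n) :
    ((q.2 i : ℝ) * 2 ^ q.1 ≤ p i ∧ p i ≤ ((q.2 i : ℝ) + 1) * 2 ^ q.1) ∧
    (0 < w i → (q.2 i : ℝ) * 2 ^ q.1 < p i) ∧
    (w i < 0 → p i < ((q.2 i : ℝ) + 1) * 2 ^ q.1) := by
  have h1 : ∃ᶠ t : ℝ in 𝓝[>] 0, (q.2 i : ℝ) * 2 ^ q.1 ≤ p i - t * w i ∧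
      p i - t * w i < ((q.2 i : ℝ) + 1) * 2 ^ q.1 := by
    refine h.mono fun t ht => ?_
    have := ht i
    simpa using this
  have hlim : Tendsto (fun t : ℝ => p i - t * w i) (𝓝[>] 0) (𝓝 (p i)) := by
    have : Continuous fun t : ℝ => p i - t * w i := by fun_prop
    simpa using (this.tendsto 0).mono_left nhdsWithin_le_nhds
  have h2 := (isClosed_Icc (a := (q.2 i : ℝ) * 2 ^ q.1)
    (b := ((q.2 i : ℝ) + 1) * 2 ^ q.1)).mem_of_frequently_of_tendsto
    (h1.mono fun t ht => ⟨ht.1, ht.2.le⟩) hlim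
  obtain ⟨t, ⟨hta, htb⟩, ht0⟩ := (h1.and_eventually self_mem_nhdsWithin).exists
  have ht0 : 0 < t := ht0
  refine ⟨h2, fun hw => ?_, fun hw => ?_⟩
  · have := mul_pos ht0 hw; linarith
  · have := mul_neg_of_pos_of_neg ht0 hw; linarith

/-- Countable set of rational directions. -/
def ratV {n : ℕ} (u : Fin n → ℚ) : En n := WithLp.toLp 2 (fun i => (u i : ℝ))

/-- Exceptional points. -/
def excS {n : ℕ} (c : En n) : Set (En n) :=
  {p | ∀ i, p i ∈ insert (c i) (range fun a : ℤ × ℤ => (a.2 : ℝ) * 2 ^ a.1)}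

lemma excS_countable {n : ℕ} (c : En n) : (excS c).Countable := by
  have h := Set.countable_pi (s := fun i : Fin n =>
    insert (c i) (range fun a : ℤ × ℤ => (a.2 : ℝ) * 2 ^ a.1))
    (fun i => (countable_range _).insert _)
  have := h.preimage_of_injOn (f := fun p : En n => (fun i => p i)) (by
    intro x _ y _ hxy
    ext i
    exact congrFun hxy i)
  refine this.mono ?_
  intro p hp
  exact hp

lemma exists_dir {n : ℕ} {c p : En n} {r : ℝ} (hp : p ∈ closedBall c r) {k : Fin n}
    (hk : p k ≠ c k) (σ : Fin n → Bool) :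
    ∃ u : Fin n → ℚ, p - ratV u ∈ ball c r ∧
      ∀ i, i ≠ k → (σ i = true → 0 < ratV u i) ∧ (σ i = false → ratV u i < 0) := by
  let w0 : Fin n → ℝ := fun i => if i = k then p k - c k else 0
  have h0 : p - WithLp.toLp 2 w0 ∈ ball c r := by
    rw [mem_ball]
    refine lt_of_lt_of_le ?_ (mem_closedBall.1 hp)
    rw [EuclideanSpace.dist_eq, EuclideanSpace.dist_eq]
    refine Real.sqrt_lt_sqrt (Finset.sum_nonneg fun i _ => by positivity) ?_
    refine Finset.sum_lt_sum (fun i _ => ?_) ⟨k, Finset.mem_univ _, ?_⟩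
    · by_cases hik : i = k
      · subst hik; simp [w0]
      · simp [w0, hik]
    · simp only [PiLp.sub_apply, w0]
      have : 0 < dist (p k) (c k) := dist_pos.2 hk
      simp; positivity
  have hO : IsOpen {w : Fin n → ℝ | p - WithLp.toLp 2 w ∈ ball c r} := by
    refine isOpen_ball.preimage ?_
    have : Continuous (fun w : Fin n → ℝ => WithLp.toLp 2 w) := PiLp.continuous_toLp 2 _
    fun_prop
  obtain ⟨ε, hε, hball⟩ := Metric.isOpen_iff.1 hO w0 h0
  have hex : ∀ i, ∃ x : ℚ, |(x : ℝ) - w0 i| < ε ∧ (σ i = true → w0 i < x) ∧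
      (σ i = false → (x : ℝ) < w0 i) := by
    intro i
    cases hσ : σ i
    · obtain ⟨x, h1, h2⟩ := exists_rat_btwn (show w0 i - ε < w0 i by linarith)
      exact ⟨x, by rw [abs_lt]; constructor <;> linarith, by simp, fun _ => h2⟩
    · obtain ⟨x, h1, h2⟩ := exists_rat_btwn (show w0 i < w0 i + ε by linarith)
      exact ⟨x, by rw [abs_lt]; constructor <;> linarith, fun _ => h1, by simp⟩
  choose u hu1 hu2 hu3 using hex
  refine ⟨u, ?_, fun i hi => ⟨fun h => ?_, fun h => ?_⟩⟩
  · have : (fun i => (u i : ℝ)) ∈ ball w0 ε := by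
      rw [mem_ball, dist_pi_lt_iff hε]
      intro i
      rw [Real.dist_eq]
      exact hu1 i
    exact hball this
  · have := hu2 i h
    simpa [w0, hi, ratV] using this
  · have := hu3 i h
    simpa [w0, hi, ratV] using this

lemma mem_interior_good {n : ℕ} {c p : En n} {r : ℝ} {C : Set (Idx n)}
    (hC : ball c r ⊆ fam C) (hp : p ∈ closedBall c r) (hexc : p ∉ excS c)
    (hbad : ∀ u : Fin n → ℚ, p ∉ badS C (ratV u)) : p ∈ interior (fam C) := by
  simp only [excS, mem_ofPred_eq, not_forall, mem_insert_iff, not_or] at hexc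
  obtain ⟨k, hk, hdy⟩ := hexc
  have hdy : ∀ (l m : ℤ), p k ≠ (m : ℝ) * 2 ^ l := by
    intro l m h
    exact hdy ⟨(l, m), h.symm⟩
  have hcub : ∀ σ : Fin n → Bool, ∃ q ∈ C, ∀ i,
      ((q.2 i : ℝ) * 2 ^ q.1 ≤ p i ∧ p i ≤ ((q.2 i : ℝ) + 1) * 2 ^ q.1) ∧
      (σ i = true ∨ i = k → (q.2 i : ℝ) * 2 ^ q.1 < p i) ∧
      (σ i = false ∨ i = k → p i < ((q.2 i : ℝ) + 1) * 2 ^ q.1) := by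
    intro σ
    obtain ⟨u, hu, hs⟩ := exists_dir hp hk σ
    have hev : ∀ᶠ t : ℝ in 𝓝[>] 0, p - t • ratV u ∈ fam C := by
      have : ∀ᶠ t : ℝ in 𝓝[>] 0, t ∈ Ioo (0 : ℝ) 1 := Ioo_mem_nhdsGT one_pos
      filter_upwards [this] with t ht
      apply hC
      have hr : r ≠ 0 := by
        rintro rfl
        simp at hu
      have hcv := (convex_closedBall c r).combo_closure_interior_mem_interior
        (x := p) (y := p - ratV u) (subset_closure hp)
        (by rw [interior_closedBall c hr]; exact hu)
        (a := 1 - t) (b := t) (by linarith [ht.2]) ht.1 (by ring)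
      rw [interior_closedBall c hr] at hcv
      convert hcv using 1
      module
    obtain ⟨q, hq, hfr⟩ := good_cube (hbad u) hev
    refine ⟨q, hq, fun i => ?_⟩
    obtain ⟨h1, h2, h3⟩ := good_cube_coord hfr i
    by_cases hik : i = k
    · subst hik
      refine ⟨h1, fun _ => lt_of_le_of_ne h1.1 (hdy _ _).symm, fun _ => lt_of_le_of_ne h1.2 ?_⟩
      have := hdy q.1 (q.2 i + 1)
      push_cast at this
      exact this
    · obtain ⟨ha, hb⟩ := hs i hik
      refine ⟨h1, fun h => h2 (ha ?_), fun h => h3 (hb ?_)⟩ <;> tauto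
  choose Q hQC hQ using hcub
  rw [mem_interior_iff_mem_nhds]
  have hnear : ∀ᶠ y : En n in 𝓝 p, ∀ σ : Fin n → Bool, ∀ i,
      (((Q σ).2 i : ℝ) * 2 ^ (Q σ).1 < p i → ((Q σ).2 i : ℝ) * 2 ^ (Q σ).1 < y i) ∧
      (p i < (((Q σ).2 i : ℝ) + 1) * 2 ^ (Q σ).1 → y i < (((Q σ).2 i : ℝ) + 1) * 2 ^ (Q σ).1) := by
    rw [eventually_all]; intro σ
    rw [eventually_all]; intro i
    have hci : Tendsto (fun y : En n => y i) (𝓝 p) (𝓝 (p i)) := by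
      have : Continuous fun y : En n => y i := by fun_prop
      exact this.tendsto p
    refine Eventually.and ?_ ?_
    · rw [eventually_imp_distrib_left]
      exact fun h => hci.eventually_const_lt h
    · rw [eventually_imp_distrib_left]
      exact fun h => hci.eventually_lt_const h
  filter_upwards [hnear] with y hy
  let σ : Fin n → Bool := fun i => decide (y i < p i)
  refine mem_fam.2 ⟨Q σ, hQC σ, ?_⟩
  intro i
  obtain ⟨h1, h2, h3⟩ := hQ σ i
  obtain ⟨h4, h5⟩ := hy σ i
  by_cases hlt : y i < p i
  · have : σ i = true := by simp [σ, hlt]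
    exact ⟨(h4 (h2 (Or.inl this))).le, hlt.trans_le h1.2⟩
  · have : σ i = false := by simp [σ, hlt]
    exact ⟨h1.1.trans (not_lt.1 hlt), h5 (h3 (Or.inl this))⟩

lemma content_closedBall_le {n : ℕ} {δ : ℝ} (hδ : 0 < δ) (c : En n) (r : ℝ) :
    dyadicContent n δ (closedBall c r) ≤ dyadicContent n δ (ball c r) := by
  refine le_of_forall_gt fun a ha => ?_
  obtain ⟨C, hC, hlt⟩ := exists_cover ha
  refine lt_of_le_of_lt ?_ hlt
  let Z : Set (En n) := excS c ∪ ⋃ u : Fin n → ℚ, badS C (ratV u)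
  have hunion : ∀ A B : Set (En n), dyadicContent n δ (A ∪ B) ≤
      dyadicContent n δ A + dyadicContent n δ B := by
    intro A B
    rw [union_eq_iUnion]
    refine (content_iUnion_le hδ _).trans ?_
    rw [tsum_bool, add_comm]
    rfl
  have hZ : dyadicContent n δ Z = 0 := by
    refine le_antisymm ((hunion _ _).trans ?_) zero_le
    rw [content_countable hδ (excS_countable c),
      content_null_iUnion hδ _ fun u => content_bad hδ hlt.ne_top (ratV u)]
    simp
  have hsub : closedBall c r ⊆ interior (fam C) ∪ Z := by
    intro p hp
    by_cases hz : p ∈ Z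
    · exact Or.inr hz
    · left
      simp only [Z, mem_union, mem_iUnion, not_or, not_exists] at hz
      exact mem_interior_good (hC.trans interior_subset) hp hz.1 hz.2
  refine (content_mono hsub).trans ((hunion _ _).trans ?_)
  rw [hZ, add_zero]
  exact content_le_cost hδ Subset.rfl

lemma content_ball_usc {n : ℕ} {δ : ℝ} (hδ : 0 < δ) (c : En n) {r : ℝ} {a : ℝ≥0∞}
    (ha : dyadicContent n δ (ball c r) < a) :
    ∀ᶠ x in 𝓝 c, dyadicContent n δ (ball x r) < a := by
  obtain ⟨C, hC, hlt⟩ := exists_cover ((content_closedBall_le hδ c r).trans_lt ha)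
  obtain ⟨ε, hε, hth⟩ := (isCompact_closedBall c r).exists_thickening_subset_open
    isOpen_interior hC
  filter_upwards [ball_mem_nhds c hε] with x hx
  refine lt_of_le_of_lt (content_le_cost hδ ?_) hlt
  refine Subset.trans ?_ hth
  intro y hy
  rcases le_or_gt r 0 with hr | hr
  · simp [ball_eq_empty.2 hr] at hy
  refine mem_thickening_iff.2 ⟨y - (x - c), ?_, ?_⟩
  · rw [mem_closedBall, dist_eq_norm]
    rw [mem_ball, dist_eq_norm] at hy
    have e : y - (x - c) - c = y - x := by abel
    rw [e]
    exact hy.le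
  · rw [dist_eq_norm]
    rw [mem_ball, dist_eq_norm] at hx
    convert hx using 2
    exact sub_sub_cancel y (x - c)

lemma choquet_mono {n : ℕ} {δ : ℝ} {A B : Set (En n)} (h : A ⊆ B) (f : En n → ℝ≥0∞) :
    choquetIntegral n δ A f ≤ choquetIntegral n δ B f :=
  lintegral_mono fun _ => content_mono fun _ hx => ⟨h hx.1, hx.2⟩

lemma choquet_lsc {n : ℕ} {δ : ℝ} (hδ : 0 < δ) (f : En n → ℝ≥0∞) (c : En n) (r : ℝ) {a : ℝ≥0∞}
    (ha : a < choquetIntegral n δ (ball c r) f) :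
    ∀ᶠ x in 𝓝 c, a < choquetIntegral n δ (ball x r) f := by
  let ρ : ℕ → ℝ := fun j => r - 1 / ((j : ℝ) + 1)
  have hρ : Monotone ρ := by
    intro i j hij
    have : 1 / ((j : ℝ) + 1) ≤ 1 / ((i : ℝ) + 1) :=
      one_div_le_one_div_of_le (by positivity) (by gcongr)
    simp only [ρ]; linarith
  have hsup : choquetIntegral n δ (ball c r) f ≤ ⨆ j, choquetIntegral n δ (ball c (ρ j)) f := by
    unfold choquetIntegral
    rw [← lintegral_iSup]
    · refine lintegral_mono fun t => ?_
      refine le_trans (content_mono ?_) (content_iUnion_mono hδ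
        (fun j => {x | x ∈ ball c (ρ j) ∧ ENNReal.ofReal t < f x}) ?_)
      · rintro x ⟨hx, hfx⟩
        obtain ⟨j, hj⟩ := exists_nat_one_div_lt (sub_pos.2 (mem_ball.1 hx))
        refine mem_iUnion.2 ⟨j, ?_, hfx⟩
        rw [mem_ball]; simp only [ρ]; linarith
      · intro i j hij x hx
        exact ⟨ball_subset_ball (hρ hij) hx.1, hx.2⟩
    · intro j
      refine Antitone.measurable fun s t hst => content_mono fun x hx => ⟨hx.1, ?_⟩
      exact lt_of_le_of_lt (ENNReal.ofReal_le_ofReal hst) hx.2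
    · intro i j hij t
      exact content_mono fun x hx => ⟨ball_subset_ball (hρ hij) hx.1, hx.2⟩
  obtain ⟨j, hj⟩ := lt_iSup_iff.1 (ha.trans_le hsup)
  have hpos : 0 < 1 / ((j : ℝ) + 1) := by positivity
  filter_upwards [ball_mem_nhds c hpos] with x hx
  refine hj.trans_le (choquet_mono (ball_subset_ball' ?_) f)
  rw [mem_ball, dist_comm] at hx
  simp only [ρ]; linarith

lemma ballAvg_lsc {n : ℕ} {δ : ℝ} (hδ : 0 < δ) (f : En n → ℝ≥0∞) (r : ℝ) :
    LowerSemicontinuous (fun x => ballAvg n δ f x r) := by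
  intro c a ha
  have ha : a < choquetIntegral n δ (ball c r) f / dyadicContent n δ (ball c r) := ha
  set D := dyadicContent n δ (ball c r) with hD
  have hDt : D ≠ ⊤ := by
    intro h
    rw [h, ENNReal.div_top] at ha
    exact not_lt_zero ha
  have hD0 : D ≠ 0 := by
    intro h
    have : choquetIntegral n δ (ball c r) f = 0 := by
      unfold choquetIntegral
      have : ∀ t : ℝ, dyadicContent n δ {x | x ∈ ball c r ∧ ENNReal.ofReal t < f x} = 0 := by
        intro t
        refine le_antisymm ?_ zero_le
        rw [← h]
        exact content_mono fun x hx => hx.1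
      simp only [this, lintegral_zero]
    rw [this, ENNReal.zero_div] at ha
    exact not_lt_zero ha
  have hat : a ≠ ⊤ := ha.ne_top
  rw [ENNReal.lt_div_iff_mul_lt (Or.inl hD0) (Or.inl hDt)] at ha
  obtain ⟨D', ⟨hD', hDt'⟩, hlt⟩ : ∃ D', (D < D' ∧ D' < ⊤) ∧ a * D' < choquetIntegral n δ (ball c r) f := by
    have hcont : Tendsto (fun d => a * d) (𝓝[>] D) (𝓝 (a * D)) :=
      (ENNReal.Tendsto.const_mul tendsto_id (Or.inr hat)).mono_left nhdsWithin_le_nhds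
    have hne : (𝓝[>] D).NeBot := nhdsGT_neBot_of_exists_gt ⟨⊤, hDt.lt_top⟩
    have hlt : ∀ᶠ d in 𝓝[>] D, d < ⊤ :=
      (tendsto_id.mono_left nhdsWithin_le_nhds).eventually_lt_const hDt.lt_top
    obtain ⟨d, ⟨h1, h3⟩, h2⟩ :=
      (((hcont.eventually_lt_const ha).and hlt).and self_mem_nhdsWithin).exists
    exact ⟨d, ⟨h2, h3⟩, h1⟩
  filter_upwards [choquet_lsc hδ f c r hlt, content_ball_usc hδ c hD'] with x h1 h2
  unfold ballAvg
  have h3 : a < choquetIntegral n δ (ball x r) f / D' := by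
    rw [ENNReal.lt_div_iff_mul_lt (Or.inl (bot_lt_of_lt hD').ne') (Or.inl hDt'.ne)]
    exact h1
  exact h3.trans_le (ENNReal.div_le_div_left h2.le _)

lemma limsupAvg_measurable {n : ℕ} {δ : ℝ} (hδ : 0 < δ) (f : En n → ℝ≥0∞) :
    Measurable (fun x => limsupAvg n δ f x) := by
  have h : (fun x => limsupAvg n δ f x) = fun x => ⨅ j : ℕ, ⨆ (r : ℝ)
      (_ : r ∈ Ioo (0 : ℝ) (1 / ((j : ℝ) + 1))), ballAvg n δ f x r := by
    funext x
    unfold limsupAvg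
    rw [(nhdsGT_basis (0 : ℝ)).limsup_eq_iInf_iSup]
    refine le_antisymm ?_ ?_
    · exact le_iInf fun j => iInf₂_le _ (by positivity)
    · refine le_iInf₂ fun ε hε => ?_
      obtain ⟨j, hj⟩ := exists_nat_one_div_lt hε
      exact iInf_le_of_le j (biSup_mono fun r hr => ⟨hr.1, hr.2.trans hj⟩)
  rw [h]
  refine Measurable.iInf fun j => LowerSemicontinuous.measurable ?_
  exact lowerSemicontinuous_biSup fun r _ => ballAvg_lsc hδ f r

/-- for a nonnegative locally `nL¹(H̃^δ_∞)` function, the ball average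
`x ↦ f^δ_{B(x,r)}` is lower semicontinuous for each fixed `r > 0`, and
`x ↦ limsup_{r→0⁺} f^δ_{B(x,r)}` is Lebesgue measurable. -/
theorem ballAvg_lsc_and_limsup_lebesgue_measurable (n : ℕ) (hn : 1 ≤ n)
    (δ : ℝ) (hδ0 : 0 < δ) (hδn : δ ≤ n) (f : En n → ℝ≥0∞)
    (hf : ∀ K : Set (En n), Bornology.IsBounded K → choquetIntegral n δ K f < ⊤) :
    (∀ r : ℝ, 0 < r → LowerSemicontinuous (fun x => ballAvg n δ f x r)) ∧
    NullMeasurable (fun x => limsupAvg n δ f x) (volume : Measure (En n)) := by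
  exact ⟨fun r _ => ballAvg_lsc hδ0 f r, (limsupAvg_measurable hδ0 f).nullMeasurable⟩
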